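/- Let n ≥ 1, γ > 0 a real number, and l ∈ ℕ. For each l set D_l := ∏_{i=0}^{l−1} (γ + i). Then for every x ∈ ℝⁿ \ {0} and all indices i₁, …, i_l ∈ {1, …, n}, the l-th order partial derivative of the function x ↦ ‖x‖^{−γ} satisfies |∂_{i₁} ⋯ ∂_{i_l} (‖x‖^{−γ})| ≤ D_l ‖x‖^{−(γ+l)}. -/

import Mathlib

open MeasureTheory Metric Filter Topology Manifold

lemma cdiff_aux (z : ℂ) (hz : z ∈ Complex.slitPlane) (a : ℂ) (n : WithTop ℕ∞) :
    ContDiffAt ℝ n (fun t : ℝ => (z + (t : ℂ)) ^ a) 0 := by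
  have h1 : AnalyticAt ℂ (fun t : ℂ => (z + t) ^ a) (Complex.ofRealCLM (0:ℝ)) := by
    apply AnalyticAt.cpow
    · fun_prop
    · fun_prop
    · simpa using hz
  have h2 : ContDiffAt ℝ n (fun t : ℂ => (z + t) ^ a) (Complex.ofRealCLM (0:ℝ)) :=
    h1.contDiffAt.restrict_scalars ℝ
  exact h2.comp (0:ℝ) Complex.ofRealCLM.contDiff.contDiffAt

lemma deriv_aux (z : ℂ) (a : ℂ) (t : ℝ) (hz : z + t ∈ Complex.slitPlane) :
    HasDerivAt (fun t : ℝ => (z + (t : ℂ)) ^ a) (a * (z + t) ^ (a - 1)) t := by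
  have h1 : HasDerivAt (fun t : ℂ => (z + t) ^ a) (a * (z + t) ^ (a - 1) * 1) (t : ℂ) :=
    HasDerivAt.cpow_const ((hasDerivAt_id (t:ℂ)).const_add z) hz
  simpa using h1.comp_ofReal

lemma bound_aux (z w : ℂ) (hz : z ∈ Complex.slitPlane) (hw : w ∈ Complex.slitPlane) (r : ℝ)
    (hzr : ‖z‖ = r) (hwr : ‖w‖ = r) (l : ℕ) : ∀ a b : ℝ, 0 ≤ a → 0 ≤ b →
    ‖iteratedDeriv l (fun t : ℝ => (z + (t : ℂ)) ^ (-a : ℂ) * (w + (t : ℂ)) ^ (-b : ℂ)) 0‖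
      ≤ (∏ i ∈ Finset.range l, (a + b + i)) * r ^ (-(a + b + l)) := by
  have hr : 0 < r := by
    rw [← hzr]; exact norm_pos_iff.2 (Complex.slitPlane_ne_zero hz)
  induction l with
  | zero =>
    intro a b ha hb
    have e1 := Complex.norm_cpow_real z (-a)
    have e2 := Complex.norm_cpow_real w (-b)
    push_cast at e1 e2
    simp only [iteratedDeriv_zero, Complex.ofReal_zero, add_zero, norm_mul, e1, e2, hzr, hwr,
      ← Real.rpow_add hr]
    simp
    apply le_of_eq; congr 1; ring
  | succ l ih =>
    intro a b ha hb
    rw [iteratedDeriv_succ']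
    have ev : ∀ z : ℂ, z ∈ Complex.slitPlane → ∀ᶠ t : ℝ in 𝓝 0, z + (t:ℂ) ∈ Complex.slitPlane := by
      intro z hz
      have : ContinuousAt (fun t : ℝ => z + (t:ℂ)) 0 := by fun_prop
      exact this.eventually_mem (Complex.isOpen_slitPlane.mem_nhds (by simpa using hz))
    have key : deriv (fun t : ℝ => (z + (t : ℂ)) ^ (-a : ℂ) * (w + (t : ℂ)) ^ (-b : ℂ)) =ᶠ[𝓝 0]
        fun t : ℝ => (-a : ℂ) * ((z + (t : ℂ)) ^ (-((a+1 : ℝ) : ℂ)) * (w + (t : ℂ)) ^ (-b : ℂ))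
          + (-b : ℂ) * ((z + (t : ℂ)) ^ (-a : ℂ) * (w + (t : ℂ)) ^ (-((b+1 : ℝ) : ℂ))) := by
      filter_upwards [ev z hz, ev w hw] with t h1 h2
      rw [((deriv_aux z _ t h1).fun_mul (deriv_aux w _ t h2)).deriv]
      push_cast
      rw [show -(a:ℂ) - 1 = -(a+1) by ring, show -(b:ℂ) - 1 = -(b+1) by ring]
      ring
    rw [key.iteratedDeriv_eq, iteratedDeriv_fun_add, iteratedDeriv_const_mul_field,
      iteratedDeriv_const_mul_field]
    · have h1 := ih (a+1) b (by linarith) hb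
      have h2 := ih a (b+1) ha (by linarith)
      refine (norm_add_le _ _).trans ?_
      rw [norm_mul, norm_mul, norm_neg, norm_neg, Complex.norm_of_nonneg ha, Complex.norm_of_nonneg hb]
      refine (add_le_add (mul_le_mul_of_nonneg_left h1 ha) (mul_le_mul_of_nonneg_left h2 hb)).trans
        (le_of_eq ?_)
      rw [Finset.prod_range_succ']
      have e1 : ∀ i : ℕ, a + 1 + b + (i:ℝ) = a + b + ((i + 1 : ℕ) : ℝ) := by
        intro i; push_cast; ring
      have e2 : ∀ i : ℕ, a + (b + 1) + (i:ℝ) = a + b + ((i + 1 : ℕ) : ℝ) := by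
        intro i; push_cast; ring
      simp only [e1, e2]
      push_cast
      ring
    · exact contDiffAt_const.mul ((cdiff_aux z hz _ _).mul (cdiff_aux w hw _ _))
    · exact contDiffAt_const.mul ((cdiff_aux z hz _ _).mul (cdiff_aux w hw _ _))

section helpers

variable {E : Type*} [NormedAddCommGroup E] [InnerProductSpace ℝ E]

lemma cdiff_norm (γ : ℝ) (x : E) (hx : x ≠ 0) (n : WithTop ℕ∞) :
    ContDiffAt ℝ n (fun z : E => ‖z‖ ^ (-γ)) x :=
  (contDiffAt_norm ℝ hx).rpow_const_of_ne (norm_ne_zero_iff.2 hx)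

lemma line_aux (f : E → ℝ) (v : E) (l : ℕ) : ∀ (x : E), ContDiffAt ℝ ⊤ f x →
    (iteratedDeriv l (fun t : ℝ => f (x + t • v)) ) 0 = iteratedFDeriv ℝ l f x (fun _ => v) := by
  suffices H : ∀ x : E, ContDiffAt ℝ ⊤ f x → (iteratedDeriv l (fun t : ℝ => f (x + t • v)))
      =ᶠ[𝓝 0] fun t => iteratedFDeriv ℝ l f (x + t • v) (fun _ => v) by
    intro x hx
    simpa using (H x hx).eq_of_nhds
  intro x hx
  induction l with
  | zero => simp
  | succ l ih =>
    rw [iteratedDeriv_succ]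
    have h1 := ih.deriv
    have h2 : ∀ᶠ t : ℝ in 𝓝 0, ContDiffAt ℝ ⊤ f (x + t • v) := by
      have hc : ContinuousAt (fun t : ℝ => x + t • v) 0 := by fun_prop
      have := hx.eventually (by simp)
      rw [ContinuousAt] at hc
      simp only [zero_smul, add_zero] at hc
      exact hc.eventually this
    filter_upwards [h1, h2] with t h1 h2
    rw [h1]
    exact (h2.of_le (by exact_mod_cast le_top)).deriv_fderiv_add_smul

lemma diag_pos (γ : ℝ) (hγ : 0 < γ) (l : ℕ) (x v : E) (hx : x ≠ 0) (hv : ‖v‖ = 1)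
    (hp : 0 ≤ inner ℝ x v) :
    |iteratedFDeriv ℝ l (fun z : E => ‖z‖ ^ (-γ)) x (fun _ => v)|
      ≤ (∏ i ∈ Finset.range l, (γ + i)) * ‖x‖ ^ (-(γ + l)) := by
  set p := inner ℝ x v with hpd
  have hpr : p ≤ ‖x‖ := by simpa [hv] using real_inner_le_norm x v
  have hx0 : 0 < ‖x‖ := norm_pos_iff.2 hx
  set q := Real.sqrt (‖x‖^2 - p^2) with hq
  have hq2 : q ^ 2 = ‖x‖^2 - p^2 := Real.sq_sqrt (by nlinarith)
  let z : ℂ := ⟨p, q⟩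
  have hn : ∀ t : ℝ, ‖z + t‖ = ‖x + t • v‖ := by
    intro t
    rw [← sq_eq_sq₀ (norm_nonneg _) (norm_nonneg _), ← Complex.normSq_eq_norm_sq,
      Complex.normSq_apply, norm_add_sq_real, norm_smul, inner_smul_right, hv, ← hpd]
    simp [z]
    linear_combination hq2
  have hzn : ‖z‖ = ‖x‖ := by simpa using hn 0
  have hz : z ∈ Complex.slitPlane := by
    rw [Complex.mem_slitPlane_iff]
    by_cases h : q = 0
    · left
      rw [h] at hq2
      have : 0 < p ^ 2 := by nlinarith
      show 0 < p
      exact lt_of_le_of_ne hp (by rintro h; rw [← h] at this; simp at this)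
    · exact Or.inr h
  have hw : (starRingEnd ℂ) z ∈ Complex.slitPlane := by
    rw [Complex.mem_slitPlane_iff] at hz ⊢
    simpa using hz
  have hF := bound_aux z ((starRingEnd ℂ) z) hz hw ‖x‖ hzn (by simpa using hzn) l (γ/2) (γ/2)
    (by linarith) (by linarith)
  rw [add_halves] at hF
  refine le_trans (le_of_eq ?_) hF
  rw [← line_aux _ v l x (cdiff_norm γ x hx _), ← Real.norm_eq_abs, ← Complex.norm_real]
  congr 1
  have hg : ContDiffAt ℝ l (fun t : ℝ => ‖x + t • v‖ ^ (-γ)) 0 := by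
    have h1 : ContDiffAt ℝ l (fun z : E => ‖z‖ ^ (-γ)) (x + (0:ℝ) • v) :=
      cdiff_norm γ _ (by simpa using hx) _
    have h0 : ContDiffAt ℝ l (fun t : ℝ => x + t • v) 0 := by fun_prop
    exact ContDiffAt.comp (g := fun z : E => ‖z‖ ^ (-γ)) (f := fun t : ℝ => x + t • v) (0:ℝ) h1 h0
  have h1 := Complex.ofRealCLM.iteratedFDeriv_comp_left hg le_rfl
  have h2 := congrArg (fun m => m (fun _ => (1:ℝ))) h1
  simp only [ContinuousLinearMap.compContinuousMultilinearMap_coe, Function.comp_apply,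
    ← iteratedDeriv_eq_iteratedFDeriv, Complex.ofRealCLM_apply] at h2
  rw [← h2]
  apply Filter.EventuallyEq.iteratedDeriv_eq
  have hc : ContinuousAt (fun t : ℝ => z + (t:ℂ)) 0 := by fun_prop
  filter_upwards [hc.eventually_mem (Complex.isOpen_slitPlane.mem_nhds (by simpa using hz))]
    with t ht
  have e : (starRingEnd ℂ) z + (t:ℂ) = (starRingEnd ℂ) (z + t) := by simp
  have harg := (Complex.mem_slitPlane_iff_arg.1 ht).1
  rw [e, Complex.conj_cpow _ _ harg]
  have e3 : (starRingEnd ℂ) (-((γ/2 : ℝ) : ℂ)) = (-((γ/2 : ℝ) : ℂ)) := by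
    rw [map_neg, Complex.conj_ofReal]
  rw [e3, Complex.mul_conj, Complex.normSq_eq_norm_sq]
  have e4 := Complex.norm_cpow_real (z + t) (-(γ/2))
  rw [Complex.ofReal_neg] at e4
  rw [e4, hn, ← Real.rpow_natCast, ← Real.rpow_mul (norm_nonneg _)]
  simp only [Function.comp_apply, Complex.ofRealCLM_apply]
  congr 2
  push_cast; ring

lemma diag (γ : ℝ) (hγ : 0 < γ) (l : ℕ) (x v : E) (hx : x ≠ 0) (hv : ‖v‖ = 1) :
    |iteratedFDeriv ℝ l (fun z : E => ‖z‖ ^ (-γ)) x (fun _ => v)|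
      ≤ (∏ i ∈ Finset.range l, (γ + i)) * ‖x‖ ^ (-(γ + l)) := by
  rcases le_total 0 (inner ℝ x v) with h | h
  · exact diag_pos γ hγ l x v hx hv h
  · have := diag_pos γ hγ l x (-v) hx (by simpa using hv) (by simpa using h)
    have e := (iteratedFDeriv ℝ l (fun z : E => ‖z‖ ^ (-γ)) x).map_smul_univ (fun _ => (-1:ℝ)) (fun _ => v)
    simp only [neg_smul, one_smul] at e
    rw [e, smul_eq_mul, abs_mul] at this
    simpa using this

lemma sum_update_aux {E : Type*} [NormedAddCommGroup E] {l : ℕ} (v : Fin l → E) (i : Fin l) (p : E) :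
    ∑ k, Function.update v i p k = ∑ k, v k - v i + p := by
  rw [Finset.sum_update_of_mem (Finset.mem_univ i),
    ← Finset.add_sum_erase _ _ (Finset.mem_univ i), Finset.sdiff_singleton_eq_erase]
  abel

lemma polar_step {l : ℕ} (L : ContinuousMultilinearMap ℝ (fun _ : Fin l => E) ℝ)
    (hs : ∀ (v : Fin l → E) (σ : Equiv.Perm (Fin l)), L (v ∘ σ) = L v)
    (v : Fin l → E) (hv : ∀ k, ‖v k‖ = 1)
    (hM : ∀ w : Fin l → E, (∀ k, ‖w k‖ = 1) → |L w| ≤ |L v|)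
    (hS : ∀ w : Fin l → E, (∀ k, ‖w k‖ = 1) → |L w| = |L v| → ‖∑ k, w k‖ ≤ ‖∑ k, v k‖)
    (i j : Fin l) (hij : i ≠ j) : v i = v j := by
  let B : E → E → ℝ := fun p q => L (Function.update (Function.update v i p) j q)
  set M := |L v| with hMd
  have hM0 : 0 ≤ M := abs_nonneg _
  set a := v i with ha
  set b := v j with hb
  have hBab : B a b = L v := by simp [B, ha, hb]
  have add2 : ∀ p q q', B p (q + q') = B p q + B p q' := fun p q q' => L.map_update_add _ _ _ _
  have smul2 : ∀ (c : ℝ) p q, B p (c • q) = c * B p q := fun c p q => L.map_update_smul _ _ _ _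
  have sym : ∀ p q, B p q = B q p := by
    intro p q
    show L _ = L _
    rw [← hs _ (Equiv.swap i j)]
    congr 1
    ext1 k
    simp only [Function.comp_apply]
    by_cases h1 : k = i
    · subst h1; simp [hij]
    · by_cases h2 : k = j
      · subst h2; simp [hij]
      · rw [Equiv.swap_apply_of_ne_of_ne h1 h2]; simp [h1, h2]
  have add1 : ∀ p p' q, B (p + p') q = B p q + B p' q := by
    intro p p' q; rw [sym, add2, sym q p, sym q p']
  have smul1 : ∀ (c : ℝ) p q, B (c • p) q = c * B p q := by
    intro c p q; rw [sym, smul2, sym q p]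
  have neg1 : ∀ p q, B (-p) q = - B p q := by
    intro p q; simpa using smul1 (-1) p q
  have neg2 : ∀ p q, B p (-q) = - B p q := by
    intro p q; simpa using smul2 (-1) p q
  have unitw : ∀ p q, ‖p‖ = 1 → ‖q‖ = 1 →
      ∀ k, ‖Function.update (Function.update v i p) j q k‖ = 1 := by
    intro p q hp hq k
    by_cases h2 : k = j
    · subst h2; simpa using hq
    · by_cases h1 : k = i
      · subst h1; simpa [h2] using hp
      · simpa [h1, h2] using hv k
  have hBM : ∀ p q, ‖p‖ = 1 → ‖q‖ = 1 → |B p q| ≤ M := fun p q hp hq => hM _ (unitw p q hp hq)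
  set R := ∑ k, v k - a - b with hR
  have hvs : ∑ k, v k = R + a + b := by rw [hR]; abel
  have hBS : ∀ p q, ‖p‖ = 1 → ‖q‖ = 1 → M ≤ |B p q| → ‖R + p + q‖ ≤ ‖R + a + b‖ := by
    intro p q hp hq h
    have := hS _ (unitw p q hp hq) (le_antisymm (hBM p q hp hq) h)
    rw [sum_update_aux, sum_update_aux, Function.update_of_ne hij.symm, ← ha, ← hb, hvs] at this
    rw [← hvs, hvs]
    convert this using 2
    abel
  have hna : ‖a‖ = 1 := hv i
  have hnb : ‖b‖ = 1 := hv j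
  have hdiag : ∀ p, |B p p| ≤ M * ‖p‖ ^ 2 := by
    intro p
    by_cases hp : p = 0
    · subst hp
      have := smul1 0 0 0
      simp at this
      simp [this]
    · have hp' : ‖p‖ ≠ 0 := norm_ne_zero_iff.2 hp
      have hu : ‖‖p‖⁻¹ • p‖ = 1 := by
        rw [norm_smul, norm_inv, norm_norm, inv_mul_cancel₀ hp']
      have e : B p p = ‖p‖ ^ 2 * B (‖p‖⁻¹ • p) (‖p‖⁻¹ • p) := by
        rw [smul1, smul2]; field_simp
      rw [e, abs_mul, abs_of_nonneg (sq_nonneg _), mul_comm]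
      exact mul_le_mul_of_nonneg_right (hBM _ _ hu hu) (sq_nonneg _)
  have hpar : ‖a + b‖ ^ 2 + ‖a - b‖ ^ 2 = 4 := by
    have := parallelogram_law_with_norm ℝ a b
    rw [hna, hnb] at this
    nlinarith
  by_cases hs0 : a + b = 0
  · exfalso
    have hba : b = -a := by rw [eq_neg_iff_add_eq_zero, add_comm]; exact hs0
    have h1 := hBS a (-b) hna (by simpa using hnb) (by rw [neg2, hBab, abs_neg])
    have h2 := hBS (-a) b (by simpa using hna) hnb (by rw [neg1, hBab, abs_neg])
    rw [hba] at h1 h2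
    have e0 : R + a + -a = R := by abel
    have e1 : R + a + - -a = R + (a + a) := by abel
    have e2 : R + -a + -a = R - (a + a) := by abel
    rw [e0] at h1 h2
    rw [e1] at h1
    rw [e2] at h2
    have h3 := parallelogram_law_with_norm ℝ R (a + a)
    have h4 : ‖a + a‖ = 2 := by rw [← two_smul ℝ a, norm_smul, hna]; norm_num
    rw [h4] at h3
    nlinarith [norm_nonneg (R + (a + a)), norm_nonneg (R - (a+a)), norm_nonneg R]
  · set σ := ‖a + b‖ with hσ
    have hσ0 : 0 < σ := norm_pos_iff.2 hs0
    set u := σ⁻¹ • (a + b) with hu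
    have hu1 : ‖u‖ = 1 := by
      rw [hu, norm_smul, norm_inv, hσ, norm_norm, inv_mul_cancel₀ hσ0.ne']
    have hsu : a + b = σ • u := by rw [hu, smul_smul, mul_inv_cancel₀ hσ0.ne', one_smul]
    have hB1 : B (a + b) (a + b) - B (a - b) (a - b) = 4 * L v := by
      rw [sub_eq_add_neg a b]
      simp only [add1, add2, neg1, neg2]
      rw [sym b a, hBab]; ring
    have hB2 : B (a + b) (a + b) = σ ^ 2 * B u u := by
      rw [hsu, smul1, smul2]; ring
    have hMu : M ≤ |B u u| := by
      have h1 : 4 * M ≤ σ ^ 2 * |B u u| + M * ‖a - b‖ ^ 2 := by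
        have : 4 * M = |B (a + b) (a + b) - B (a - b) (a - b)| := by
          rw [hB1, abs_mul]; norm_num; rfl
        rw [this]
        refine (abs_sub _ _).trans (add_le_add ?_ (hdiag _))
        rw [hB2, abs_mul, abs_of_nonneg (sq_nonneg _)]
      have h2 : σ ^ 2 * M ≤ σ ^ 2 * |B u u| := by nlinarith
      exact le_of_mul_le_mul_left h2 (by positivity)
    clear_value u
    have h1 := hBS u u hu1 hu1 hMu
    have h2 := hBS (-a) (-b) (by simpa using hna) (by simpa using hnb)
      (by rw [neg1, neg2, hBab, neg_neg])
    have f0 : R + a + b = R + σ • u := by rw [← hsu]; abel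
    have f1 : R + u + u = R + (2:ℝ) • u := by rw [two_smul]; abel
    have f2 : R + -a + -b = R - σ • u := by rw [← hsu]; abel
    rw [f0] at h1 h2
    rw [f1] at h1
    rw [f2] at h2
    have g1 := pow_le_pow_left₀ (norm_nonneg _) h1 2
    have g2 := pow_le_pow_left₀ (norm_nonneg _) h2 2
    rw [norm_add_sq_real, norm_add_sq_real, inner_smul_right, inner_smul_right, norm_smul,
      norm_smul, hu1] at g1
    rw [norm_add_sq_real, norm_sub_sq_real, inner_smul_right, norm_smul, hu1] at g2
    simp only [Real.norm_eq_abs, mul_one, sq_abs] at g1 g2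
    set c := inner ℝ R u
    have hc : 0 ≤ c := by
      have : 0 ≤ σ * c := by linarith
      exact nonneg_of_mul_nonneg_right this hσ0
    have h2σ : 2 ≤ σ := by
      by_contra hlt
      push Not at hlt
      nlinarith [mul_pos (sub_pos.2 hlt) (by linarith : 0 < 2 * c + 2 + σ)]
    have : ‖a - b‖ ^ 2 ≤ 0 := by nlinarith
    have h0 : ‖a - b‖ = 0 := by
      apply pow_eq_zero_iff (two_ne_zero) |>.1
      exact le_antisymm this (sq_nonneg _)
    exact sub_eq_zero.1 (norm_eq_zero.1 h0)

lemma polar [ProperSpace E] {l : ℕ} (L : ContinuousMultilinearMap ℝ (fun _ : Fin l => E) ℝ)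
    (hs : ∀ (v : Fin l → E) (σ : Equiv.Perm (Fin l)), L (v ∘ σ) = L v) (C : ℝ)
    (e : E) (he : ‖e‖ = 1) (hC : ∀ v : E, ‖v‖ = 1 → |L (fun _ => v)| ≤ C)
    (w : Fin l → E) (hw : ∀ k, ‖w k‖ = 1) : |L w| ≤ C := by
  have hK : IsCompact (Set.univ.pi fun _ : Fin l => Metric.sphere (0:E) 1) :=
    isCompact_univ_pi fun _ => isCompact_sphere _ _
  have hLc : Continuous fun v : Fin l → E => |L v| := L.cont.abs
  obtain ⟨v0, hv0, hmax⟩ := hK.exists_isMaxOn ⟨w, by simpa using hw⟩ hLc.continuousOn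
  have hK' : IsCompact ((Set.univ.pi fun _ : Fin l => Metric.sphere (0:E) 1) ∩
      {v | |L v| = |L v0|}) := hK.inter_right (isClosed_eq hLc continuous_const)
  have hSc : Continuous fun v : Fin l → E => ‖∑ k, v k‖ := by fun_prop
  obtain ⟨v, hv, hmax'⟩ := hK'.exists_isMaxOn ⟨v0, hv0, rfl⟩ hSc.continuousOn
  have hvu : ∀ k, ‖v k‖ = 1 := by simpa using hv.1
  have hvL : |L v| = |L v0| := hv.2
  have hM : ∀ w : Fin l → E, (∀ k, ‖w k‖ = 1) → |L w| ≤ |L v| := by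
    intro w hw
    rw [hvL]
    exact hmax (show w ∈ _ by simpa using hw)
  have step := polar_step L hs v hvu hM (fun w hw h => hmax' ⟨by simpa using hw, h.trans hvL⟩)
  refine (hM w hw).trans ?_
  have : ∃ u : E, ‖u‖ = 1 ∧ v = fun _ => u := by
    rcases Nat.eq_zero_or_pos l with h | h
    · subst h
      exact ⟨e, he, Subsingleton.elim _ _⟩
    · refine ⟨v ⟨0, h⟩, hvu _, ?_⟩
      ext1 k
      by_cases hk : k = ⟨0, h⟩
      · rw [hk]
      · exact step _ _ hk
  obtain ⟨u, hu, rfl⟩ := this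
  exact hC u hu

end helpers

/-- Bounds for the iterated partial derivatives of `x ↦ ‖x‖^{-γ}`:
`|∂_{i₁} ⋯ ∂_{i_l} ‖x‖^{-γ}| ≤ D_l ‖x‖^{-(γ+l)}` with `D_l = γ(γ+1)⋯(γ+l-1)`. -/
theorem deriv_bounds_of_norm_rpow
    (n : ℕ) (hn : 1 ≤ n) (γ : ℝ) (hγ : 0 < γ) (l : ℕ)
    (D : ℝ) (hD : D = ∏ i ∈ Finset.range l, (γ + i)) :
    ∀ x : EuclideanSpace ℝ (Fin n), x ≠ 0 →
      ∀ idx : Fin l → Fin n,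
        |iteratedFDeriv ℝ l (fun z : EuclideanSpace ℝ (Fin n) => ‖z‖ ^ (-γ)) x
            (fun j => EuclideanSpace.single (idx j) (1:ℝ))|
          ≤ D * ‖x‖ ^ (-(γ + l)) := by
  intro x hx idx
  rw [hD]
  exact polar _ (fun v σ => (cdiff_norm γ x hx _).iteratedFDeriv_comp_perm v σ) _
    (EuclideanSpace.single ⟨0, hn⟩ (1:ℝ)) (by simp) (fun v hv => diag γ hγ l x v hx hv) _
    (by simp)
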